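/- The set {f ∈ ℝ^{N_G} : f ≥ 0 componentwise} \ Ω_f is contained in a finite union of linear subspaces of ℝ^{N_G}, each of dimension at most N_G − 1. -/

import Mathlib

open Matrix

noncomputable section

/-- Parameter tuple ξ = (s̄, s̲, p̄, p̲). -/
abbrev XiT (NG E : ℕ) : Type := (Fin NG → ℝ) × (Fin NG → ℝ) × (Fin E → ℝ) × (Fin E → ℝ)

/-- Each column of `C` has exactly one `+1`, one `-1`, and zeros elsewhere. -/
def IsIncidence {NG NL E : ℕ} (C : Matrix (Fin (NG + NL)) (Fin E) ℝ) : Prop :=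
  ∀ e : Fin E, ∃ u v : Fin (NG + NL), u ≠ v ∧ C u e = 1 ∧ C v e = -1 ∧
    ∀ w : Fin (NG + NL), w ≠ u → w ≠ v → C w e = 0

/-- Connectedness: the kernel of `Cᵀ` consists exactly of the constant vectors. -/
def ConnectedIncidence {NG NL E : ℕ} (C : Matrix (Fin (NG + NL)) (Fin E) ℝ) : Prop :=
  ∀ x : Fin (NG + NL) → ℝ, Cᵀ *ᵥ x = 0 ↔ ∃ c : ℝ, x = fun _ => c

/-- `B` is diagonal with strictly positive diagonal entries. -/
def PosDiag {E : ℕ} (B : Matrix (Fin E) (Fin E) ℝ) : Prop :=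
  (∀ e, 0 < B e e) ∧ ∀ e e' : Fin E, e ≠ e' → B e e' = 0

/-- Feasibility of `(s^g, θ)` for the DC-OPF with limits `ξ` and loads `sl`. -/
def Feasible {NG NL E : ℕ} (C : Matrix (Fin (NG + NL)) (Fin E) ℝ)
    (B : Matrix (Fin E) (Fin E) ℝ) (ξ : XiT NG E) (sl : Fin NL → ℝ)
    (sg : Fin NG → ℝ) (θ : Fin (NG + NL) → ℝ) : Prop :=
  (∀ h : 0 < NG + NL, θ ⟨0, h⟩ = 0) ∧
  (C * B * Cᵀ) *ᵥ θ = Fin.append sg (fun j => -(sl j)) ∧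
  (∀ i, ξ.2.1 i ≤ sg i ∧ sg i ≤ ξ.1 i) ∧
  (∀ e, ξ.2.2.2 e ≤ ((B * Cᵀ) *ᵥ θ) e ∧ ((B * Cᵀ) *ᵥ θ) e ≤ ξ.2.2.1 e)

/-- The set Ω_ξ of admissible system limits. -/
def OmegaXi {NG NL E : ℕ} (C : Matrix (Fin (NG + NL)) (Fin E) ℝ)
    (B : Matrix (Fin E) (Fin E) ℝ) : Set (XiT NG E) :=
  { ξ | (∀ i, 0 ≤ ξ.2.1 i) ∧ (∀ i, ξ.2.1 i < ξ.1 i) ∧ (∀ e, ξ.2.2.2 e < ξ.2.2.1 e) ∧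
    ∃ sl : Fin NL → ℝ, (∀ j, 0 < sl j) ∧ ∃ sg θ, Feasible C B ξ sl sg θ }

/-- The set Ω_sl(ξ) of strictly positive feasible load profiles. -/
def OmegaSl {NG NL E : ℕ} (C : Matrix (Fin (NG + NL)) (Fin E) ℝ)
    (B : Matrix (Fin E) (Fin E) ℝ) (ξ : XiT NG E) : Set (Fin NL → ℝ) :=
  { sl | (∀ j, 0 < sl j) ∧ ∃ sg θ, Feasible C B ξ sl sg θ }

/-- `(sg, θ)` is an optimal solution of the DC-OPF. -/
def IsOptimal {NG NL E : ℕ} (C : Matrix (Fin (NG + NL)) (Fin E) ℝ)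
    (B : Matrix (Fin E) (Fin E) ℝ) (f : Fin NG → ℝ) (ξ : XiT NG E)
    (sl : Fin NL → ℝ) (sg : Fin NG → ℝ) (θ : Fin (NG + NL) → ℝ) : Prop :=
  Feasible C B ξ sl sg θ ∧
  ∀ sg' θ', Feasible C B ξ sl sg' θ' → f ⬝ᵥ sg ≤ f ⬝ᵥ sg'

/-- The matrix M: first N rows are C B Cᵀ, last row is e₁ᵀ. -/
def Mmat {NG NL E : ℕ} (C : Matrix (Fin (NG + NL)) (Fin E) ℝ)
    (B : Matrix (Fin E) (Fin E) ℝ) : Matrix (Fin (NG + NL + 1)) (Fin (NG + NL)) ℝ :=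
  Matrix.of fun i j => if h : (i : ℕ) < NG + NL then (C * B * Cᵀ) ⟨(i : ℕ), h⟩ j
    else if (j : ℕ) = 0 then 1 else 0

/-- KKT point for the DC-OPF. -/
def IsKKT {NG NL E : ℕ} (C : Matrix (Fin (NG + NL)) (Fin E) ℝ)
    (B : Matrix (Fin E) (Fin E) ℝ) (f : Fin NG → ℝ) (ξ : XiT NG E)
    (sl : Fin NL → ℝ) (sg : Fin NG → ℝ) (θ : Fin (NG + NL) → ℝ)
    (τ : Fin (NG + NL + 1) → ℝ) (μp μm : Fin E → ℝ) (lp lm : Fin NG → ℝ) : Prop :=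
  Feasible C B ξ sl sg θ ∧
  (Mmat C B)ᵀ *ᵥ τ + (C * B) *ᵥ (μp - μm) = 0 ∧
  (∀ i : Fin NG, -f i = -τ (Fin.castLE (by omega) i) + lp i - lm i) ∧
  (∀ e, 0 ≤ μp e) ∧ (∀ e, 0 ≤ μm e) ∧ (∀ i, 0 ≤ lp i) ∧ (∀ i, 0 ≤ lm i) ∧
  μp ⬝ᵥ (((B * Cᵀ) *ᵥ θ) - ξ.2.2.1) = 0 ∧
  μm ⬝ᵥ (ξ.2.2.2 - ((B * Cᵀ) *ᵥ θ)) = 0 ∧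
  lp ⬝ᵥ (sg - ξ.1) = 0 ∧
  lm ⬝ᵥ (ξ.2.1 - sg) = 0

/-- ℓ₀ "norm": number of nonzero entries. -/
def nnz {n : ℕ} (v : Fin n → ℝ) : ℕ := Set.ncard { i | v i ≠ 0 }

/-- The set Ω_f of well-behaved cost vectors. -/
def OmegaF {NG NL E : ℕ} (C : Matrix (Fin (NG + NL)) (Fin E) ℝ)
    (B : Matrix (Fin E) (Fin E) ℝ) : Set (Fin NG → ℝ) :=
  { f | (∀ i, 0 ≤ f i) ∧
    ∀ ξ ∈ OmegaXi C B, ∀ sl ∈ OmegaSl C B ξ,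
      (∃! p : (Fin NG → ℝ) × (Fin (NG + NL) → ℝ), IsOptimal C B f ξ sl p.1 p.2) ∧
      ∀ sg θ τ μp μm lp lm, IsKKT C B f ξ sl sg θ τ μp μm lp lm →
        NG - 1 ≤ nnz μp + nnz μm + nnz lp + nnz lm }

/-- Number of binding inequality constraints at `(sg, θ)` (among the 2N_G + 2E). -/
def bindingCount {NG NL E : ℕ} (C : Matrix (Fin (NG + NL)) (Fin E) ℝ)
    (B : Matrix (Fin E) (Fin E) ℝ) (ξ : XiT NG E) (sg : Fin NG → ℝ)
    (θ : Fin (NG + NL) → ℝ) : ℕ :=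
  Set.ncard { i : Fin NG | sg i = ξ.1 i } + Set.ncard { i : Fin NG | sg i = ξ.2.1 i } +
  Set.ncard { e : Fin E | ((B * Cᵀ) *ᵥ θ) e = ξ.2.2.1 e } +
  Set.ncard { e : Fin E | ((B * Cᵀ) *ᵥ θ) e = ξ.2.2.2 e }

/-- ~Ω_sl(ξ, f): loads with exactly N_G − 1 binding constraints at the optimum. -/
def TOmegaSl {NG NL E : ℕ} (C : Matrix (Fin (NG + NL)) (Fin E) ℝ)
    (B : Matrix (Fin E) (Fin E) ℝ) (f : Fin NG → ℝ) (ξ : XiT NG E) :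
    Set (Fin NL → ℝ) :=
  { sl | sl ∈ OmegaSl C B ξ ∧
    ∀ sg θ, IsOptimal C B f ξ sl sg θ → bindingCount C B ξ sg θ = NG - 1 }

/-- Indices of binding inequality constraints:
`inl i` = upper generation, `inr (inl i)` = lower generation,
`inr (inr (inl e))` = upper flow, `inr (inr (inr e))` = lower flow. -/
def BindingIdx {NG NL E : ℕ} (C : Matrix (Fin (NG + NL)) (Fin E) ℝ)
    (B : Matrix (Fin E) (Fin E) ℝ) (ξ : XiT NG E) (sg : Fin NG → ℝ)
    (θ : Fin (NG + NL) → ℝ) : Set (Fin NG ⊕ Fin NG ⊕ Fin E ⊕ Fin E) :=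
  { c | match c with
    | Sum.inl i => sg i = ξ.1 i
    | Sum.inr (Sum.inl i) => sg i = ξ.2.1 i
    | Sum.inr (Sum.inr (Sum.inl e)) => ((B * Cᵀ) *ᵥ θ) e = ξ.2.2.1 e
    | Sum.inr (Sum.inr (Sum.inr e)) => ((B * Cᵀ) *ᵥ θ) e = ξ.2.2.2 e }

/-- Gradients of the N + 1 equality constraints, as vectors in ℝ^{N_G} × ℝ^{N}. -/
def eqGrad {NG NL E : ℕ} (C : Matrix (Fin (NG + NL)) (Fin E) ℝ)
    (B : Matrix (Fin E) (Fin E) ℝ) :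
    (Unit ⊕ Fin (NG + NL)) → (Fin NG → ℝ) × (Fin (NG + NL) → ℝ)
  | Sum.inl _ => (0, fun j => if (j : ℕ) = 0 then 1 else 0)
  | Sum.inr i => ((fun k : Fin NG => if (k : ℕ) = (i : ℕ) then -1 else 0),
      fun j => (C * B * Cᵀ) i j)

/-- Gradients of the inequality constraints. -/
def ineqGrad {NG NL E : ℕ} (C : Matrix (Fin (NG + NL)) (Fin E) ℝ)
    (B : Matrix (Fin E) (Fin E) ℝ) :
    (Fin NG ⊕ Fin NG ⊕ Fin E ⊕ Fin E) → (Fin NG → ℝ) × (Fin (NG + NL) → ℝ)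
  | Sum.inl i => (Pi.single i 1, 0)
  | Sum.inr (Sum.inl i) => (-Pi.single i 1, 0)
  | Sum.inr (Sum.inr (Sum.inl e)) => (0, fun j => (B * Cᵀ) e j)
  | Sum.inr (Sum.inr (Sum.inr e)) => (0, fun j => -(B * Cᵀ) e j)

/-- The family of gradients of all equality constraints together with the binding
inequality constraints at `(sg, θ)`. -/
def fullGrad {NG NL E : ℕ} (C : Matrix (Fin (NG + NL)) (Fin E) ℝ)
    (B : Matrix (Fin E) (Fin E) ℝ) (ξ : XiT NG E) (sg : Fin NG → ℝ)
    (θ : Fin (NG + NL) → ℝ) :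
    ((Unit ⊕ Fin (NG + NL)) ⊕ ↥(BindingIdx C B ξ sg θ)) →
      (Fin NG → ℝ) × (Fin (NG + NL) → ℝ) :=
  fun i => match i with
    | Sum.inl j => eqGrad C B j
    | Sum.inr c => ineqGrad C B c.1

/-- S_G ⊥ S_B : the equality-constraint gradients together with the gradients
`(e_i, 0)`, `i ∈ S_G`, and `(0, row e of B Cᵀ)`, `e ∈ S_B`, are linearly independent. -/
def Perp {NG NL E : ℕ} (C : Matrix (Fin (NG + NL)) (Fin E) ℝ)
    (B : Matrix (Fin E) (Fin E) ℝ) (SG : Finset (Fin NG)) (SB : Finset (Fin E)) : Prop :=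
  LinearIndependent ℝ (fun i : (Unit ⊕ Fin (NG + NL)) ⊕ (↥SG ⊕ ↥SB) =>
    match i with
    | Sum.inl j => eqGrad C B j
    | Sum.inr (Sum.inl g) => ((Pi.single (g : Fin NG) 1 : Fin NG → ℝ), (0 : Fin (NG + NL) → ℝ))
    | Sum.inr (Sum.inr e) => ((0 : Fin NG → ℝ), fun j => (B * Cᵀ) (e : Fin E) j))

/-- The OPF operator: the generation part of the (unique) optimal solution. -/
def OPFmap {NG NL E : ℕ} (C : Matrix (Fin (NG + NL)) (Fin E) ℝ)
    (B : Matrix (Fin E) (Fin E) ℝ) (f : Fin NG → ℝ) (ξ : XiT NG E)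
    (sl : Fin NL → ℝ) : Fin NG → ℝ := by
  classical
  exact if h : ∃ p : (Fin NG → ℝ) × (Fin (NG + NL) → ℝ), IsOptimal C B f ξ sl p.1 p.2
    then h.choose.1 else 0

/-- The matrix R(S_G, S_B)ᵀ: rows N_G+1,…,N of C B Cᵀ; the rows of C B Cᵀ indexed
by S_G; the rows of B Cᵀ indexed by S_B; and e₁ᵀ. -/
def Rmat {NG NL E : ℕ} (C : Matrix (Fin (NG + NL)) (Fin E) ℝ)
    (B : Matrix (Fin E) (Fin E) ℝ) (SG : Finset (Fin NG)) (SB : Finset (Fin E)) :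
    Matrix ((Fin NL ⊕ (↥SG ⊕ ↥SB)) ⊕ Unit) (Fin (NG + NL)) ℝ :=
  Matrix.of fun i j => match i with
    | Sum.inl (Sum.inl k) => (C * B * Cᵀ) (Fin.natAdd NG k) j
    | Sum.inl (Sum.inr (Sum.inl g)) => (C * B * Cᵀ) (Fin.castAdd NL (g : Fin NG)) j
    | Sum.inl (Sum.inr (Sum.inr e)) => (B * Cᵀ) (e : Fin E) j
    | Sum.inr _ => if (j : ℕ) = 0 then 1 else 0

/-- The matrix Π applied to a load vector: embeds ℝ^{N_L} in the row-index space. -/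
def padSl {NG NL E : ℕ} (SG : Finset (Fin NG)) (SB : Finset (Fin E))
    (v : Fin NL → ℝ) : (Fin NL ⊕ (↥SG ⊕ ↥SB)) ⊕ Unit → ℝ
  | Sum.inl (Sum.inl k) => v k
  | _ => 0

/-- J(S_G, S_B) as a map: v ↦ −G (R(S_G,S_B)ᵀ)⁻¹ Π v, where G consists of the
first N_G rows of C B Cᵀ. -/
def JFun {NG NL E : ℕ} (C : Matrix (Fin (NG + NL)) (Fin E) ℝ)
    (B : Matrix (Fin E) (Fin E) ℝ) (SG : Finset (Fin NG)) (SB : Finset (Fin E))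
    (v : Fin NL → ℝ) : Fin NG → ℝ :=
  fun i =>
    -(((C * B * Cᵀ) *ᵥ (Function.invFun (Rmat C B SG SB).mulVec (padSl SG SB v)))
      (Fin.castAdd NL i))

/-- J(S_G, S_B) as an N_G × N_L matrix. -/
def Jmatrix {NG NL E : ℕ} (C : Matrix (Fin (NG + NL)) (Fin E) ℝ)
    (B : Matrix (Fin E) (Fin E) ℝ) (SG : Finset (Fin NG)) (SB : Finset (Fin E)) :
    Matrix (Fin NG) (Fin NL) ℝ :=
  Matrix.of fun i j => JFun C B SG SB (Pi.single j 1) i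

/-!
Since `s^g` is determined by `θ`, the DC-OPF minimizes a linear functional of `θ` over a polyhedron
`{θ | lo ≤ A θ ≤ hi}`, where `A` is injective by connectedness; hence minimizers exist. For a set
`S` of constraints containing all equalities, let `K S` be the space of directions along which the
constraints in `S` stay constant. If `f` violates one of the two requirements of `Ω_f`, then its
cost vanishes on some nonzero `K S`:

* if there are two minimizers, take for `S` the constraints tight at their midpoint; the cost is
  stationary there, and `K S` contains the difference of the minimizers;
* if a KKT point has fewer than `N_G - 1` nonzero inequality multipliers, take for `S` the
  equalities together with the support of these multipliers; this gives fewer than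
  `N_L + 1 + (N_G - 1) = N` constraints, so `K S` is nonzero, and stationarity says that the cost
  vanishes on it.

For each of the finitely many sets `S` with `K S` nonzero, the costs vanishing on `K S` form a
proper subspace: a nonzero direction in `K S` changes the generations, since otherwise it would be a
constant vector with vanishing first coordinate.
-/

section LinearProgram

variable {𝕜 ι E F : Type*} [Field 𝕜] [AddCommGroup E] [Module 𝕜 E] [AddCommGroup F] [Module 𝕜 F]

/-- The space of directions along which the constraint values `A x` with index in `S` stay
constant, i.e. the kernel of the rows of `A` indexed by `S`. -/
def coordKer (A : E →ₗ[𝕜] ι → 𝕜) (S : Set ι) : Submodule 𝕜 E :=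
  LinearMap.ker (LinearMap.funLeft 𝕜 𝕜 ((↑) : S → ι) ∘ₗ A)

/-- An objective `c` is degenerate for the constraints `A`, those in `S₀` being equalities, if it
is constant along a nonzero space of directions that is cut out by keeping some set `S ⊇ S₀` of
constraint values fixed. -/
def IsDegenerate (A : E →ₗ[𝕜] ι → 𝕜) (S₀ : Set ι) (c : Module.Dual 𝕜 E) : Prop :=
  ∃ S, S₀ ⊆ S ∧ coordKer A S ≠ ⊥ ∧ coordKer A S ≤ LinearMap.ker c

theorem mem_coordKer {A : E →ₗ[𝕜] ι → 𝕜} {S : Set ι} {d : E} :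
    d ∈ coordKer A S ↔ ∀ i ∈ S, A d i = 0 := by
  simp [coordKer, funext_iff, LinearMap.funLeft_apply]

theorem coordKer_anti (A : E →ₗ[𝕜] ι → 𝕜) : Antitone (coordKer A) :=
  fun _ _ hST _ hd => mem_coordKer.2 fun i hi => mem_coordKer.1 hd i (hST hi)

theorem coordKer_ne_bot_of_ncard_lt_finrank [Finite ι] [FiniteDimensional 𝕜 E]
    (A : E →ₗ[𝕜] ι → 𝕜) {S : Set ι} (hS : S.ncard < Module.finrank 𝕜 E) : coordKer A S ≠ ⊥ := by
  have := Fintype.ofFinite S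
  apply LinearMap.ker_ne_bot_of_finrank_lt
  rwa [Module.finrank_fintype_fun_eq_card, ← Nat.card_eq_fintype_card, Nat.card_coe_set_eq]

/-- Lagrange multipliers supported in `S` certify that the objective is constant along
`coordKer A S`, which is nonzero when `S` is small. -/
theorem finrank_le_ncard_of_not_isDegenerate [Fintype ι] [FiniteDimensional 𝕜 E]
    {A : E →ₗ[𝕜] ι → 𝕜} {S₀ S : Set ι} {c : Module.Dual 𝕜 E} (hc : ¬IsDegenerate A S₀ c)
    {y : ι → 𝕜} (hcy : ∀ d, c d = y ⬝ᵥ A d) (hS₀ : S₀ ⊆ S) (hy : Function.support y ⊆ S) :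
    Module.finrank 𝕜 E ≤ S.ncard := by
  by_contra! hlt
  refine hc ⟨S, hS₀, coordKer_ne_bot_of_ncard_lt_finrank A hlt, fun d hd => ?_⟩
  rw [LinearMap.mem_ker, hcy]
  refine Finset.sum_eq_zero fun i _ => ?_
  by_cases hi : y i = 0
  · rw [hi, zero_mul]
  · rw [mem_coordKer.1 hd i (hy hi), mul_zero]

theorem exists_cover_isDegenerate [Finite ι] [FiniteDimensional 𝕜 F] (A : E →ₗ[𝕜] ι → 𝕜)
    (S₀ : Set ι) (Φ : F →ₗ[𝕜] Module.Dual 𝕜 E)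
    (hΦ : ∀ d ∈ coordKer A S₀, (∀ f, Φ f d = 0) → d = 0) :
    ∃ (k : ℕ) (V : Fin k → Submodule 𝕜 F),
      (∀ m, Module.finrank 𝕜 (V m) < Module.finrank 𝕜 F) ∧
      {f | IsDegenerate A S₀ (Φ f)} ⊆ ⋃ m, (V m : Set F) := by
  let W (S : Set ι) : Submodule 𝕜 F := (coordKer A S).dualAnnihilator.comap Φ
  have hW {S f} : f ∈ W S ↔ ∀ d ∈ coordKer A S, Φ f d = 0 := Submodule.mem_dualAnnihilator _
  obtain ⟨k, V, -, hV⟩ :=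
    (Set.toFinite (W '' {S | S₀ ⊆ S ∧ coordKer A S ≠ ⊥})).fin_param
  refine ⟨k, V, fun m => Submodule.finrank_lt fun htop => ?_, ?_⟩
  · obtain ⟨S, ⟨hS₀, hS⟩, hSm⟩ := hV.subset ⟨m, rfl⟩
    obtain ⟨d, hd, hd0⟩ := Submodule.exists_mem_ne_zero_of_ne_bot hS
    refine hd0 (hΦ d (coordKer_anti A hS₀ hd) fun f => hW.1 ?_ d hd)
    rw [hSm, htop]
    exact Submodule.mem_top
  · rintro f ⟨S, hS₀, hS, hf⟩
    obtain ⟨m, hm⟩ := hV.superset ⟨S, ⟨hS₀, hS⟩, rfl⟩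
    exact Set.mem_iUnion.2 ⟨m, hm ▸ hW.2 hf⟩

end LinearProgram

section RealLinearProgram

variable {ι E : Type*} [AddCommGroup E] [Module ℝ E]
  {A : E →ₗ[ℝ] ι → ℝ} {c : Module.Dual ℝ E} {lo hi : ι → ℝ} {S₀ : Set ι}

/-- The indices at which `y` meets one of its bounds. -/
def tightSet (lo hi y : ι → ℝ) : Set ι :=
  {i | y i = lo i ∨ y i = hi i}

theorem eq_of_mem_tightSet_midpoint {y z : ι → ℝ} (hy : y ∈ Set.Icc lo hi)
    (hz : z ∈ Set.Icc lo hi) {i : ι} (hmem : i ∈ tightSet lo hi (midpoint ℝ y z)) : y i = z i := by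
  have hyi := And.intro (hy.1 i) (hy.2 i)
  have hzi := And.intro (hz.1 i) (hz.2 i)
  simp only [tightSet, Set.mem_ofPred_eq, pi_midpoint_apply, midpoint_eq_smul_add, smul_eq_mul,
    invOf_eq_inv] at hmem
  rcases hmem with hlo | hhi <;> linarith

variable [Finite ι]

theorem exists_isMinOn_preimage_Icc (hA : Function.Injective A)
    (hne : (A ⁻¹' Set.Icc lo hi).Nonempty) (c : Module.Dual ℝ E) :
    ∃ x ∈ A ⁻¹' Set.Icc lo hi, IsMinOn c (A ⁻¹' Set.Icc lo hi) x := by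
  have := Fintype.ofFinite ι
  obtain ⟨g, hg⟩ := A.exists_leftInverse_of_injective (LinearMap.ker_eq_bot_of_injective hA)
  have hgA (x : E) : g (A x) = x := LinearMap.congr_fun hg x
  have hcompact : IsCompact (Set.Icc lo hi ∩ LinearMap.range A) :=
    isCompact_Icc.inter_right (Submodule.closed_of_finiteDimensional _)
  obtain ⟨x₀, hx₀⟩ := hne
  obtain ⟨_, ⟨hx, x, rfl⟩, hmin⟩ := hcompact.exists_isMinOn ⟨A x₀, hx₀, x₀, rfl⟩
    (c ∘ₗ g).continuous_of_finiteDimensional.continuousOn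
  refine ⟨x, hx, fun z hz => ?_⟩
  simpa [hgA] using hmin ⟨hz, z, rfl⟩

theorem eventually_add_mul_mem_Icc {a b x d : ℝ} (hx : x ∈ Set.Icc a b)
    (hd : x = a ∨ x = b → d = 0) : ∀ᶠ t in nhds (0 : ℝ), x + t * d ∈ Set.Icc a b := by
  by_cases hab : x = a ∨ x = b
  · simpa [hd hab] using hx
  · push Not at hab
    have hcont : ContinuousAt (fun t : ℝ => x + t * d) 0 := by fun_prop
    exact hcont.eventually_mem <| Icc_mem_nhds (by simpa using hx.1.lt_of_ne' hab.1)
      (by simpa using hx.2.lt_of_ne hab.2)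

theorem coordKer_tightSet_le_ker_of_isMinOn {x : E} (hx : A x ∈ Set.Icc lo hi)
    (hmin : IsMinOn c (A ⁻¹' Set.Icc lo hi) x) :
    coordKer A (tightSet lo hi (A x)) ≤ LinearMap.ker c := by
  intro d hd
  have hfeas : ∀ᶠ t in nhds (0 : ℝ), A (x + t • d) ∈ Set.Icc lo hi := by
    have h := Filter.eventually_all.2 fun i => eventually_add_mul_mem_Icc ⟨hx.1 i, hx.2 i⟩
      (mem_coordKer.1 hd i)
    filter_upwards [h] with t ht
    rw [map_add, map_smul]
    exact ⟨fun i => (ht i).1, fun i => (ht i).2⟩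
  have hlocal : IsLocalMin (fun t : ℝ => c x + t * c d) 0 := by
    filter_upwards [hfeas] with t ht
    simpa using hmin ht
  have hderiv : HasDerivAt (fun t : ℝ => c x + t * c d) (c d) 0 := by
    simpa using ((hasDerivAt_id (0 : ℝ)).mul_const (c d)).const_add (c x)
  exact hlocal.hasDerivAt_eq_zero hderiv

/-- The difference of two minimizers keeps every constraint fixed that is tight at their midpoint,
which is a minimizer as well. -/
theorem isDegenerate_of_isMinOn_of_ne (hS₀ : ∀ i ∈ S₀, lo i = hi i) {x x' : E}
    (hx : A x ∈ Set.Icc lo hi) (hx' : A x' ∈ Set.Icc lo hi)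
    (hmin : IsMinOn c (A ⁻¹' Set.Icc lo hi) x) (hmin' : IsMinOn c (A ⁻¹' Set.Icc lo hi) x')
    (hne : x ≠ x') : IsDegenerate A S₀ c := by
  have hmid : A (midpoint ℝ x x') = midpoint ℝ (A x) (A x') := by simp [midpoint_eq_smul_add]
  have hm : A (midpoint ℝ x x') ∈ Set.Icc lo hi :=
    hmid ▸ (convex_Icc lo hi).midpoint_mem hx hx'
  have hminm : IsMinOn c (A ⁻¹' Set.Icc lo hi) (midpoint ℝ x x') := fun z hz => by
    have hz₁ : c x ≤ c z := hmin hz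
    have hz₂ : c x' ≤ c z := hmin' hz
    simp only [Set.mem_ofPred_eq, midpoint_eq_smul_add, map_smul, map_add, smul_eq_mul,
      invOf_eq_inv]
    linarith
  refine ⟨_, fun i hi => ?_, ?_, coordKer_tightSet_le_ker_of_isMinOn hm hminm⟩
  · exact .inl (((hm.2 i).trans_eq (hS₀ i hi).symm).antisymm (hm.1 i))
  · refine Submodule.ne_bot_iff _ |>.2 ⟨x - x', mem_coordKer.2 fun i hi => ?_, sub_ne_zero.2 hne⟩
    rw [hmid] at hi
    rw [map_sub, Pi.sub_apply, sub_eq_zero, eq_of_mem_tightSet_midpoint hx hx' hi]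

theorem existsUnique_isMinOn_of_not_isDegenerate (hA : Function.Injective A)
    (hne : (A ⁻¹' Set.Icc lo hi).Nonempty) (hS₀ : ∀ i ∈ S₀, lo i = hi i)
    (hc : ¬IsDegenerate A S₀ c) :
    ∃! x, x ∈ A ⁻¹' Set.Icc lo hi ∧ IsMinOn c (A ⁻¹' Set.Icc lo hi) x := by
  obtain ⟨x, hx, hmin⟩ := exists_isMinOn_preimage_Icc hA hne c
  refine ⟨x, ⟨hx, hmin⟩, fun x' ⟨hx', hmin'⟩ => ?_⟩
  by_contra hxx'
  exact hc (isDegenerate_of_isMinOn_of_ne hS₀ hx' hx hmin' hmin hxx')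

end RealLinearProgram

theorem mulVec_eq_zero_of_transpose_mul_mul_mulVec_eq_zero {m n : Type*} [Fintype m]
    [Fintype n] {B : Matrix m m ℝ} (hB : B.PosDef) {A : Matrix m n ℝ} {x : n → ℝ}
    (h : (Aᵀ * B * A) *ᵥ x = 0) : A *ᵥ x = 0 := by
  by_contra hx
  have hpos := hB.dotProduct_mulVec_pos hx
  have hquad : (A *ᵥ x) ⬝ᵥ (B *ᵥ (A *ᵥ x)) = x ⬝ᵥ ((Aᵀ * B * A) *ᵥ x) := by
    rw [← mulVec_mulVec, ← mulVec_mulVec, dotProduct_mulVec x, vecMul_transpose]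
  rw [star_trivial, hquad, h, dotProduct_zero] at hpos
  exact hpos.false

theorem PosDiag.posDef {E : ℕ} {B : Matrix (Fin E) (Fin E) ℝ} (hB : PosDiag B) : B.PosDef := by
  have hdiag : B.IsDiag := fun e e' hne => hB.2 e e' hne
  exact hdiag.diagonal_diag ▸ posDef_diagonal_iff.2 hB.1

section DCOPF

variable {NG NL E : ℕ} {C : Matrix (Fin (NG + NL)) (Fin E) ℝ} {B : Matrix (Fin E) (Fin E) ℝ}
  {f : Fin NG → ℝ} {ξ : XiT NG E} {sl : Fin NL → ℝ} {sg : Fin NG → ℝ} {θ : Fin (NG + NL) → ℝ}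

/-- Positions of the constraints of the DC-OPF in terms of the angles alone: on the left the
equalities (load balances and reference angle), on the right the two-sided bounds (on generations
and line flows). -/
abbrev ConstraintIdx (NG NL E : ℕ) : Type :=
  (Fin NL ⊕ Unit) ⊕ (Fin NG ⊕ Fin E)

variable (NG NL E) in
/-- The positions of the equality constraints. -/
def equalityIdx : Set (ConstraintIdx NG NL E) :=
  Set.range Sum.inl

variable (C B) in
/-- The generations induced by the angles. -/
def generation : (Fin (NG + NL) → ℝ) →ₗ[ℝ] Fin NG → ℝ :=
  LinearMap.funLeft ℝ ℝ (Fin.castAdd NL) ∘ₗ (C * B * Cᵀ).mulVecLin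

variable (C B) in
/-- The constrained quantities as functions of the angles: net injections at the loads, reference
angle (the last row of `Mmat C B`), generations and line flows. -/
def constraintMap : (Fin (NG + NL) → ℝ) →ₗ[ℝ] ConstraintIdx NG NL E → ℝ :=
  LinearMap.pi <| Sum.elim
    (Sum.elim (fun j => LinearMap.proj (Fin.natAdd NG j) ∘ₗ (C * B * Cᵀ).mulVecLin)
      fun _ => LinearMap.proj (Fin.last _) ∘ₗ (Mmat C B).mulVecLin)
    (Sum.elim (fun i => LinearMap.proj i ∘ₗ generation C B)
      fun e => LinearMap.proj e ∘ₗ (B * Cᵀ).mulVecLin)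

variable (ξ sl) in
/-- The lower bounds on the constrained quantities; on equality constraints they agree with
`upperBound`. -/
def lowerBound : ConstraintIdx NG NL E → ℝ :=
  Sum.elim (Sum.elim (-sl) 0) (Sum.elim ξ.2.1 ξ.2.2.2)

variable (ξ sl) in
/-- The upper bounds on the constrained quantities; on equality constraints they agree with
`lowerBound`. -/
def upperBound : ConstraintIdx NG NL E → ℝ :=
  Sum.elim (Sum.elim (-sl) 0) (Sum.elim ξ.1 ξ.2.2.1)

variable (C B ξ sl) in
/-- The feasible set of the DC-OPF after eliminating `s^g` through `generation`. -/
def feasibleAngles : Set (Fin (NG + NL) → ℝ) :=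
  constraintMap C B ⁻¹' Set.Icc (lowerBound ξ sl) (upperBound ξ sl)

variable (C B) in
/-- The cost `fᵀ s^g` as a functional of the angles, depending linearly on `f`. -/
def costFunctional : (Fin NG → ℝ) →ₗ[ℝ] Module.Dual ℝ (Fin (NG + NL) → ℝ) :=
  (generation C B).dualMap ∘ₗ (dotProductEquiv ℝ (Fin NG)).toLinearMap

theorem generation_apply (i : Fin NG) :
    generation C B θ i = ((C * B * Cᵀ) *ᵥ θ) (Fin.castAdd NL i) :=
  rfl

theorem constraintMap_apply : constraintMap C B θ = Sum.elim
    (Sum.elim (fun j => ((C * B * Cᵀ) *ᵥ θ) (Fin.natAdd NG j))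
      fun _ => (Mmat C B *ᵥ θ) (Fin.last _))
    (Sum.elim (generation C B θ) ((B * Cᵀ) *ᵥ θ)) := by
  ext ((_ | _) | (_ | _)) <;> rfl

theorem costFunctional_apply : costFunctional C B f θ = f ⬝ᵥ generation C B θ :=
  rfl

theorem Mmat_mulVec_castSucc (i : Fin (NG + NL)) :
    (Mmat C B *ᵥ θ) i.castSucc = ((C * B * Cᵀ) *ᵥ θ) i := by
  simp [mulVec, dotProduct, Mmat]

theorem Mmat_mulVec_last_eq_zero_iff :
    (Mmat C B *ᵥ θ) (Fin.last _) = 0 ↔ ∀ h : 0 < NG + NL, θ ⟨0, h⟩ = 0 := by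
  have hsum : (Mmat C B *ᵥ θ) (Fin.last _) =
      ∑ j : Fin (NG + NL), if (j : ℕ) = 0 then θ j else 0 := by
    simp [mulVec, dotProduct, Mmat]
  by_cases h : 0 < NG + NL
  · have hcoord (j : Fin (NG + NL)) : (j : ℕ) = 0 ↔ j = ⟨0, h⟩ := by rw [Fin.ext_iff]
    simp [hsum, hcoord, h]
  · have hempty : (Finset.univ : Finset (Fin (NG + NL))) = ∅ :=
      Finset.eq_empty_of_forall_notMem fun j _ => h j.pos
    simp [hsum, hempty, h]

theorem mem_feasibleAngles_iff :
    θ ∈ feasibleAngles C B ξ sl ↔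
      ((∀ j, ((C * B * Cᵀ) *ᵥ θ) (Fin.natAdd NG j) = -sl j) ∧ ∀ h : 0 < NG + NL, θ ⟨0, h⟩ = 0) ∧
      (∀ i, ξ.2.1 i ≤ generation C B θ i ∧ generation C B θ i ≤ ξ.1 i) ∧
      ∀ e, ξ.2.2.2 e ≤ ((B * Cᵀ) *ᵥ θ) e ∧ ((B * Cᵀ) *ᵥ θ) e ≤ ξ.2.2.1 e := by
  have hmem : θ ∈ feasibleAngles C B ξ sl ↔ ∀ k,
      lowerBound ξ sl k ≤ constraintMap C B θ k ∧ constraintMap C B θ k ≤ upperBound ξ sl k :=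
    forall_and.symm
  rw [hmem, ← Mmat_mulVec_last_eq_zero_iff (C := C) (B := B)]
  simp only [constraintMap_apply, lowerBound, upperBound, Sum.forall, Sum.elim_inl, Sum.elim_inr,
    Pi.neg_apply, Pi.zero_apply, forall_const, ← le_antisymm_iff,
    eq_comm (a := -sl _), eq_comm (a := (0 : ℝ))]

theorem feasible_iff :
    Feasible C B ξ sl sg θ ↔ sg = generation C B θ ∧ θ ∈ feasibleAngles C B ξ sl := by
  have hbalance : (C * B * Cᵀ) *ᵥ θ = Fin.append sg (fun j => -(sl j)) ↔
      sg = generation C B θ ∧ ∀ j, ((C * B * Cᵀ) *ᵥ θ) (Fin.natAdd NG j) = -sl j := by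
    simp [funext_iff, Fin.forall_fin_add, generation_apply, eq_comm]
  rw [Feasible, hbalance, mem_feasibleAngles_iff]
  constructor
  · rintro ⟨href, ⟨rfl, hload⟩, hbounds⟩
    exact ⟨rfl, ⟨hload, href⟩, hbounds⟩
  · rintro ⟨rfl, ⟨hload, href⟩, hbounds⟩
    exact ⟨href, ⟨rfl, hload⟩, hbounds⟩

theorem isOptimal_iff :
    IsOptimal C B f ξ sl sg θ ↔ sg = generation C B θ ∧ θ ∈ feasibleAngles C B ξ sl ∧
      IsMinOn (costFunctional C B f) (feasibleAngles C B ξ sl) θ := by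
  constructor
  · rintro ⟨hfeas, hopt⟩
    obtain ⟨rfl, hθ⟩ := feasible_iff.1 hfeas
    exact ⟨rfl, hθ, fun θ' hθ' => hopt _ θ' (feasible_iff.2 ⟨rfl, hθ'⟩)⟩
  · rintro ⟨rfl, hθ, hmin⟩
    refine ⟨feasible_iff.2 ⟨rfl, hθ⟩, fun sg' θ' hfeas' => ?_⟩
    obtain ⟨rfl, hθ'⟩ := feasible_iff.1 hfeas'
    exact hmin hθ'

theorem lowerBound_eq_upperBound_of_mem_equalityIdx :
    ∀ k ∈ equalityIdx NG NL E, lowerBound ξ sl k = upperBound ξ sl k := by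
  rintro _ ⟨_, rfl⟩
  rfl

theorem eq_zero_of_generation_eq_zero (hC : ∀ x, Cᵀ *ᵥ x = 0 → ∃ c : ℝ, x = fun _ => c)
    (hB : B.PosDef) (hθ : θ ∈ coordKer (constraintMap C B) (equalityIdx NG NL E))
    (hgen : generation C B θ = 0) : θ = 0 := by
  have heq (k : Fin NL ⊕ Unit) : constraintMap C B θ (.inl k) = 0 := mem_coordKer.1 hθ _ ⟨k, rfl⟩
  have hinjection : (C * B * Cᵀ) *ᵥ θ = 0 :=
    funext <| (Fin.forall_fin_add _).2 ⟨congrFun hgen, fun j => heq (.inl j)⟩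
  have hdiff : Cᵀ *ᵥ θ = 0 :=
    mulVec_eq_zero_of_transpose_mul_mul_mulVec_eq_zero hB (by rwa [transpose_transpose])
  obtain ⟨c, rfl⟩ := hC θ hdiff
  have href := Mmat_mulVec_last_eq_zero_iff.1 (heq (.inr ()))
  exact funext fun i => href i.pos

theorem constraintMap_injective (hC : ∀ x, Cᵀ *ᵥ x = 0 → ∃ c : ℝ, x = fun _ => c)
    (hB : B.PosDef) : Function.Injective (constraintMap C B) := by
  refine (injective_iff_map_eq_zero _).2 fun θ hθ => ?_
  exact eq_zero_of_generation_eq_zero hC hB (mem_coordKer.2 fun k _ => congrFun hθ k)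
    (funext fun i => congrFun hθ (.inr (.inl i)))

theorem existsUnique_isOptimal (hC : ∀ x, Cᵀ *ᵥ x = 0 → ∃ c : ℝ, x = fun _ => c)
    (hB : B.PosDef) (hne : ∃ sg θ, Feasible C B ξ sl sg θ)
    (hf : ¬IsDegenerate (constraintMap C B) (equalityIdx NG NL E) (costFunctional C B f)) :
    ∃! p : (Fin NG → ℝ) × (Fin (NG + NL) → ℝ), IsOptimal C B f ξ sl p.1 p.2 := by
  obtain ⟨sg₀, θ₀, h₀⟩ := hne
  obtain ⟨θ, hθ, huniq⟩ := existsUnique_isMinOn_of_not_isDegenerate (constraintMap_injective hC hB)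
    ⟨θ₀, (feasible_iff.1 h₀).2⟩ lowerBound_eq_upperBound_of_mem_equalityIdx hf
  refine ⟨(generation C B θ, θ), isOptimal_iff.2 ⟨rfl, hθ⟩, ?_⟩
  rintro ⟨sg', θ'⟩ (h' : IsOptimal C B f ξ sl sg' θ')
  obtain ⟨rfl, hθ'⟩ := isOptimal_iff.1 h'
  rw [huniq θ' hθ']

variable {τ : Fin (NG + NL + 1) → ℝ} {μp μm : Fin E → ℝ} {lp lm : Fin NG → ℝ}

theorem IsKKT.costFunctional_eq_dotProduct (hB : B.IsSymm)
    (h : IsKKT C B f ξ sl sg θ τ μp μm lp lm) (d : Fin (NG + NL) → ℝ) :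
    costFunctional C B f d = Sum.elim
      (Sum.elim (fun j => -τ (Fin.natAdd NG j).castSucc) fun _ => -τ (Fin.last _))
      (Sum.elim (lm - lp) (μm - μp)) ⬝ᵥ constraintMap C B d := by
  obtain ⟨-, hstat, hcost, -⟩ := h
  have hpair : τ ⬝ᵥ (Mmat C B *ᵥ d) + (μp - μm) ⬝ᵥ ((B * Cᵀ) *ᵥ d) = 0 := by
    have hBC : B * Cᵀ = (C * B)ᵀ := by rw [transpose_mul, hB.eq]
    rw [hBC, dotProduct_mulVec, dotProduct_mulVec, vecMul_transpose, ← mulVec_transpose,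
      ← add_dotProduct, hstat, zero_dotProduct]
  have hgen : f ⬝ᵥ generation C B d =
      ∑ i, τ (Fin.castAdd NL i).castSucc * generation C B d i + (lm - lp) ⬝ᵥ generation C B d := by
    rw [dotProduct, dotProduct, ← Finset.sum_add_distrib]
    refine Finset.sum_congr rfl fun i _ => ?_
    have hi : -f i = -τ (Fin.castAdd NL i).castSucc + lp i - lm i := hcost i
    rw [← add_mul, Pi.sub_apply]
    congr 1
    linarith
  rw [costFunctional_apply, hgen, constraintMap_apply]
  simp only [dotProduct, Fin.sum_univ_castSucc, Fin.sum_univ_add, Mmat_mulVec_castSucc,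
    ← generation_apply] at hpair
  simp only [dotProduct, Fintype.sum_sum_type, Sum.elim_inl, Sum.elim_inr, Finset.univ_unique,
    Finset.sum_singleton, neg_mul, Finset.sum_neg_distrib, Pi.sub_apply, sub_mul,
    Finset.sum_sub_distrib] at hpair ⊢
  linarith

theorem IsKKT.le_nnz (hB : B.IsSymm)
    (hf : ¬IsDegenerate (constraintMap C B) (equalityIdx NG NL E) (costFunctional C B f))
    (h : IsKKT C B f ξ sl sg θ τ μp μm lp lm) :
    NG - 1 ≤ nnz μp + nnz μm + nnz lp + nnz lm := by
  have hsupp {n : ℕ} (a b : Fin n → ℝ) : (Function.support (a - b)).ncard ≤ nnz a + nnz b :=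
    (Set.ncard_le_ncard (Function.support_sub a b)).trans (Set.ncard_union_le _ _)
  set T : Set (Fin NG ⊕ Fin E) :=
    Sum.inl '' Function.support (lm - lp) ∪ Sum.inr '' Function.support (μm - μp)
  have hcard : NG + NL ≤ (equalityIdx NG NL E ∪ Sum.inr '' T).ncard := by
    have := finrank_le_ncard_of_not_isDegenerate hf (h.costFunctional_eq_dotProduct hB)
      (S := equalityIdx NG NL E ∪ Sum.inr '' T) Set.subset_union_left ?_
    · simpa using this
    rintro ((j | _) | (i | e)) hk
    · exact .inl ⟨_, rfl⟩
    · exact .inl ⟨_, rfl⟩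
    · exact .inr ⟨_, .inl ⟨i, hk, rfl⟩, rfl⟩
    · exact .inr ⟨_, .inr ⟨e, hk, rfl⟩, rfl⟩
  have hequality : (equalityIdx NG NL E).ncard = NL + 1 := by
    simp [equalityIdx, Set.ncard_range_of_injective Sum.inl_injective]
  have hT : T.ncard ≤ (Function.support (lm - lp)).ncard + (Function.support (μm - μp)).ncard :=
    (Set.ncard_union_le _ _).trans (add_le_add Set.ncard_image_le Set.ncard_image_le)
  have hunion := Set.ncard_union_le (equalityIdx NG NL E) (Sum.inr '' T)
  rw [hequality, Set.ncard_image_of_injective _ Sum.inr_injective] at hunion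
  have hlambda := hsupp lm lp
  have hmu := hsupp μm μp
  omega

theorem mem_OmegaF_of_not_isDegenerate (hC : ∀ x, Cᵀ *ᵥ x = 0 → ∃ c : ℝ, x = fun _ => c)
    (hB : B.PosDef) (hf₀ : ∀ i, 0 ≤ f i)
    (hf : ¬IsDegenerate (constraintMap C B) (equalityIdx NG NL E) (costFunctional C B f)) :
    f ∈ OmegaF C B :=
  have hsymm : B.IsSymm := (conjTranspose_eq_transpose_of_trivial B).symm.trans hB.isHermitian
  ⟨hf₀, fun _ _ _ hsl => ⟨existsUnique_isOptimal hC hB hsl.2 hf,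
    fun _ _ _ _ _ _ _ hkkt => hkkt.le_nnz hsymm hf⟩⟩

end DCOPF

theorem omegaF_complement_covered_by_subspaces_general {NG NL E : ℕ}
    (C : Matrix (Fin (NG + NL)) (Fin E) ℝ) (B : Matrix (Fin E) (Fin E) ℝ)
    (hC : ∀ x, Cᵀ *ᵥ x = 0 → ∃ c : ℝ, x = fun _ => c) (hB : B.PosDef) :
    ∃ (k : ℕ) (V : Fin k → Submodule ℝ (Fin NG → ℝ)),
      (∀ m, Module.finrank ℝ (V m) < NG) ∧
      { f : Fin NG → ℝ | ∀ i, 0 ≤ f i } \ OmegaF C B ⊆ ⋃ m, (V m : Set (Fin NG → ℝ)) := by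
  obtain ⟨k, V, hV, hcover⟩ := exists_cover_isDegenerate (constraintMap C B) (equalityIdx NG NL E)
    (costFunctional C B) fun d hd hcost => eq_zero_of_generation_eq_zero hC hB hd
      (dotProduct_self_eq_zero.1 (hcost (generation C B d)))
  refine ⟨k, V, by simpa using hV, fun f ⟨hf₀, hf⟩ => hcover ?_⟩
  by_contra hdeg
  exact hf (mem_OmegaF_of_not_isDegenerate hC hB hf₀ hdeg)

theorem omegaF_complement_covered_by_subspaces {NG NL E : ℕ} (hNG : 0 < NG) (hNL : 0 < NL) (hE : 0 < E)
    (C : Matrix (Fin (NG + NL)) (Fin E) ℝ) (B : Matrix (Fin E) (Fin E) ℝ)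
    (hInc : IsIncidence C) (hConn : ConnectedIncidence C) (hB : PosDiag B) :
    ∃ (k : ℕ) (V : Fin k → Submodule ℝ (Fin NG → ℝ)),
      (∀ m, Module.finrank ℝ (V m) ≤ NG - 1) ∧
      { f : Fin NG → ℝ | ∀ i, 0 ≤ f i } \ OmegaF C B ⊆
        ⋃ m, (V m : Set (Fin NG → ℝ)) := by
  obtain ⟨k, V, hV, hcover⟩ :=
    omegaF_complement_covered_by_subspaces_general C B (fun x => (hConn x).1) hB.posDef
  exact ⟨k, V, fun m => Nat.le_sub_one_of_lt (hV m), hcover⟩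

end
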